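/- arXiv:1312.7819 — 5 statements merged into one kernel-verified Lean document; each statement's English description precedes it below -/
import Mathlib

section
/- Let M = ℝ³ \ B(0,1) be the complement of the open unit ball, and let A > 0 be a constant such that ‖v‖_{L⁶(ℝ³)} ≤ A‖∇v‖_{L²(ℝ³)} for every continuously differentiable function v : ℝ³ → ℝ with compact support. Then for every continuously differentiable function u : ℝ³ → ℝ with compact support, ‖u‖_{L⁶(M)} ≤ 2(2+√2)·A·‖∇u‖_{L²(M)}. -/
open MeasureTheory Metric Real

noncomputable section

abbrev E3 := EuclideanSpace ℝ (Fin 3)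

open Filter Topology

/-- Smoothed maximum of `1` and `a`. -/
def smax (δ a : ℝ) : ℝ := (1 + a + Real.sqrt ((1 - a) ^ 2 + δ ^ 2)) / 2

/-- Its derivative in `a`. -/
def smaxD (δ a : ℝ) : ℝ := (1 - (1 - a) / Real.sqrt ((1 - a) ^ 2 + δ ^ 2)) / 2

lemma smax_pos_arg {δ : ℝ} (hδ : 0 < δ) (a : ℝ) : 0 < (1 - a) ^ 2 + δ ^ 2 := by positivity

lemma abs_le_sqrt_smax (δ a : ℝ) : |1 - a| ≤ Real.sqrt ((1 - a) ^ 2 + δ ^ 2) :=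
  Real.abs_le_sqrt (by nlinarith [sq_nonneg δ])

lemma one_le_smax (δ a : ℝ) : 1 ≤ smax δ a := by
  have := (le_abs_self _).trans (abs_le_sqrt_smax δ a)
  unfold smax; linarith

lemma le_smax (δ a : ℝ) : a ≤ smax δ a := by
  have := (neg_le_abs _).trans (abs_le_sqrt_smax δ a)
  unfold smax; linarith

lemma smax_le {δ : ℝ} (hδ : 0 < δ) (h1 : δ ≤ 1) {a : ℝ} (ha : 0 ≤ a) : smax δ a ≤ 2 + a := by
  have : Real.sqrt ((1 - a) ^ 2 + δ ^ 2) ≤ 2 + a := by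
    apply Real.sqrt_le_iff.2
    constructor
    · linarith
    · nlinarith
  unfold smax; linarith

lemma abs_smaxD_le {δ : ℝ} (hδ : 0 < δ) (a : ℝ) : |smaxD δ a| ≤ 1 := by
  have h0 := Real.sqrt_pos.2 (smax_pos_arg hδ a)
  have h1 := abs_le_sqrt_smax δ a
  have : |(1 - a) / Real.sqrt ((1 - a) ^ 2 + δ ^ 2)| ≤ 1 := by
    rw [abs_div, abs_of_pos h0]
    exact (div_le_one h0).2 h1
  unfold smaxD
  rw [abs_le] at *
  constructor <;> linarith

lemma hasDerivAt_smax {δ : ℝ} (hδ : 0 < δ) (a : ℝ) : HasDerivAt (smax δ) (smaxD δ a) a := by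
  have h0 := smax_pos_arg hδ a
  have h1 : HasDerivAt (fun a : ℝ => (1 - a) ^ 2 + δ ^ 2) (-(2 * (1 - a))) a := by
    have := (((hasDerivAt_id a).const_sub 1).pow 2).add_const (δ ^ 2)
    refine this.congr_deriv ?_
    simp
  have h2 := (((hasDerivAt_id a).const_add 1).add (h1.sqrt h0.ne')).div_const 2
  refine h2.congr_deriv ?_
  unfold smaxD
  have := (Real.sqrt_pos.2 h0).ne'
  field_simp
  ring

lemma tendsto_smax {δ : ℕ → ℝ} (hδ : Tendsto δ atTop (𝓝 0)) (a : ℝ) :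
    Tendsto (fun n => smax (δ n) a) atTop (𝓝 (max 1 a)) := by
  have : Continuous (fun d : ℝ => smax d a) := by unfold smax; fun_prop
  have h := (this.tendsto 0).comp hδ
  have e : smax 0 a = max 1 a := by
    unfold smax
    rw [zero_pow two_ne_zero, add_zero, Real.sqrt_sq_eq_abs]
    rcases le_total a 1 with h | h
    · rw [abs_of_nonneg (by linarith), max_eq_left h]; ring
    · rw [abs_of_nonpos (by linarith), max_eq_right h]; ring
  rw [e] at h
  exact h

lemma tendsto_smaxD {δ : ℕ → ℝ} (hδ : Tendsto δ atTop (𝓝 0)) {a : ℝ} (ha : a ≠ 1) :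
    Tendsto (fun n => smaxD (δ n) a) atTop (𝓝 (if a < 1 then 0 else 1)) := by
  have h0 : |1 - a| ≠ 0 := by
    rw [abs_ne_zero]; intro h; apply ha; linarith
  have : ContinuousAt (fun d : ℝ => smaxD d a) 0 := by
    unfold smaxD
    refine ContinuousAt.div_const (ContinuousAt.sub continuousAt_const
      (ContinuousAt.div continuousAt_const (by fun_prop) ?_)) _
    simpa [Real.sqrt_sq_eq_abs] using h0
  have h := this.tendsto.comp hδ
  have e : smaxD 0 a = if a < 1 then 0 else 1 := by
    unfold smaxD
    rw [zero_pow two_ne_zero, add_zero, Real.sqrt_sq_eq_abs]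
    split_ifs with h
    · rw [abs_of_nonneg (by linarith), div_self (by linarith)]; ring
    · rw [abs_of_nonpos (by linarith), div_neg, div_self (fun h => ha (by linarith))]; ring
  rw [e] at h
  exact h

/-- `|x|⁻²`. -/
def isq (x : E3) : ℝ := (‖x‖ ^ 2)⁻¹

/-- The derivative of `isq`. -/
def isqD (x : E3) : E3 →L[ℝ] ℝ := (-((‖x‖ ^ 2) ^ 2)⁻¹) • ((2 : ℝ) • innerSL ℝ x)

lemma isq_nonneg (x : E3) : 0 ≤ isq x := by unfold isq; positivity

lemma hasFDerivAt_isq {x : E3} (hx : x ≠ 0) : HasFDerivAt isq (isqD x) x := by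
  have hx' : ‖x‖ ^ 2 ≠ 0 := by simpa using hx
  have h := (hasDerivAt_inv hx').comp_hasFDerivAt x (hasStrictFDerivAt_norm_sq x).hasFDerivAt
  refine h.congr_fderiv ?_
  unfold isqD
  ext y
  simp

lemma norm_isqD_mul (x : E3) : ‖isqD x‖ * ‖x‖ ≤ 2 * isq x := by
  unfold isqD isq
  rcases eq_or_ne x 0 with rfl | hx
  · simp
  have hx' : 0 < ‖x‖ := norm_pos_iff.2 hx
  rw [norm_smul, norm_smul, innerSL_apply_norm, norm_neg, norm_inv, Real.norm_of_nonneg (by positivity),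
    Real.norm_of_nonneg (by positivity)]
  apply le_of_eq
  field_simp

lemma isq_smul_eq (x : E3) : isq x • x = EuclideanGeometry.inversion 0 1 x := by
  simp [EuclideanGeometry.inversion, isq]

lemma hasFDerivAt_inv0 {x : E3} (hx : x ≠ 0) : HasFDerivAt (fun x => isq x • x)
    (isq x • ((ℝ ∙ x)ᗮ.reflection : E3 →L[ℝ] E3)) x := by
  have := EuclideanGeometry.hasFDerivAt_inversion (c := (0 : E3)) (R := 1) hx
  simp only [sub_zero, dist_zero_right] at this
  simp only [isq_smul_eq]
  refine this.congr_fderiv ?_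
  simp [isq]

lemma inv0_deriv_eq {x : E3} (hx : x ≠ 0) :
    isq x • ContinuousLinearMap.id ℝ E3 + (isqD x).smulRight x =
      isq x • ((ℝ ∙ x)ᗮ.reflection : E3 →L[ℝ] E3) :=
  ((hasFDerivAt_isq hx).smul (hasFDerivAt_id x)).unique (hasFDerivAt_inv0 hx)

lemma norm_isq_smul (x : E3) : ‖isq x • x‖ = ‖x‖⁻¹ := by
  rcases eq_or_ne x 0 with rfl | hx
  · simp
  have hx' : 0 < ‖x‖ := norm_pos_iff.2 hx
  rw [norm_smul, Real.norm_of_nonneg (isq_nonneg x)]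
  unfold isq
  field_simp

lemma isq_isq (x : E3) : isq (isq x • x) • (isq x • x) = x := by
  simp only [isq_smul_eq]
  exact EuclideanGeometry.inversion_inversion _ one_ne_zero _

lemma norm_comp_inv0 (L : E3 →L[ℝ] ℝ) (x : E3) :
    ‖L.comp (isq x • ((ℝ ∙ x)ᗮ.reflection : E3 →L[ℝ] E3))‖ = isq x * ‖L‖ := by
  rw [ContinuousLinearMap.comp_smul, norm_smul, Real.norm_of_nonneg (isq_nonneg x)]
  congr 1
  exact ContinuousLinearMap.opNorm_comp_linearIsometryEquiv L _

lemma abs_det_inv0 (x : E3) :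
    |(isq x • ((ℝ ∙ x)ᗮ.reflection : E3 →L[ℝ] E3)).det| = isq x ^ 3 := by
  have : (isq x • ((ℝ ∙ x)ᗮ.reflection : E3 →L[ℝ] E3)).det
      = isq x ^ 3 * (-1) ^ (Module.finrank ℝ ((ℝ ∙ x)ᗮᗮ : Submodule ℝ E3)) := by
    rw [← Submodule.det_reflection, ContinuousLinearMap.det, ContinuousLinearMap.toLinearMap_smul, LinearMap.det_smul,
      finrank_euclideanSpace_fin]
    rfl
  rw [this, abs_mul, abs_pow, abs_pow, abs_neg, abs_one, one_pow, mul_one,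
    abs_of_nonneg (isq_nonneg x)]

lemma inversion_energy (u : E3 → ℝ) (hu : ContDiff ℝ 1 u) (husupp : HasCompactSupport u) :
    ∫ x in ball (0 : E3) 1, (isq x * ‖fderiv ℝ u (isq x • x)‖) ^ 2 ≤
      ∫ x in (ball (0 : E3) 1)ᶜ, ‖fderiv ℝ u x‖ ^ 2 := by
  have hcont : Continuous (fun x => ‖fderiv ℝ u x‖ ^ 2) :=
    ((hu.continuous_fderiv one_ne_zero).norm).pow 2
  have hsup : HasCompactSupport (fun x => ‖fderiv ℝ u x‖ ^ 2) := by
    refine (husupp.fderiv (𝕜 := ℝ)).comp_left (g := fun L => ‖L‖ ^ 2) (by simp)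
  have hint : Integrable (fun x => ‖fderiv ℝ u x‖ ^ 2) (volume : Measure E3) :=
    hcont.integrable_of_hasCompactSupport hsup
  set s : Set E3 := (closedBall 0 1)ᶜ with hs
  have hsm : MeasurableSet s := measurableSet_closedBall.compl
  have hs0 : ∀ x ∈ s, x ≠ 0 := by
    rintro x hx rfl
    simp [hs] at hx
  have himg : (fun x => isq x • x) '' s = ball (0 : E3) 1 \ {0} := by
    ext y
    constructor
    · rintro ⟨x, hx, rfl⟩
      have h1 : 1 < ‖x‖ := by simpa [hs] using hx
      refine ⟨?_, ?_⟩
      · rw [mem_ball_zero_iff, norm_isq_smul]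
        exact inv_lt_one_of_one_lt₀ h1
      · intro h
        have h' := norm_isq_smul x
        simp only [Set.mem_singleton_iff] at h
        rw [h, norm_zero] at h'
        have : 0 < ‖x‖⁻¹ := by positivity
        linarith
    · rintro ⟨h1, h2⟩
      refine ⟨isq y • y, ?_, isq_isq y⟩
      have h3 : 0 < ‖y‖ := norm_pos_iff.2 h2
      have h4 : ‖y‖ < 1 := by simpa using h1
      simp only [hs, Set.mem_compl_iff, mem_closedBall_zero_iff, not_le, norm_isq_smul]
      exact (one_lt_inv₀ h3).2 h4
  have hinj : Set.InjOn (fun x => isq x • x) s := by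
    intro x _ y _ h
    simp only at h
    rw [← isq_isq x, h, isq_isq]
  have hcv := integral_image_eq_integral_abs_det_fderiv_smul volume hsm
    (fun x hx => (hasFDerivAt_inv0 (hs0 x hx)).hasFDerivWithinAt) hinj
    (fun x => (isq x * ‖fderiv ℝ u (isq x • x)‖) ^ 2)
  have hae : (ball (0 : E3) 1 \ {0} : Set E3) =ᵐ[volume] ball (0 : E3) 1 :=
    sdiff_null_ae_eq_self (by simp)
  rw [himg, setIntegral_congr_set hae] at hcv
  rw [hcv]
  calc ∫ x in s, |(isq x • ((ℝ ∙ x)ᗮ.reflection : E3 →L[ℝ] E3)).det| •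
          (isq (isq x • x) * ‖fderiv ℝ u (isq (isq x • x) • (isq x • x))‖) ^ 2
      ≤ ∫ x in s, ‖fderiv ℝ u x‖ ^ 2 := by
        refine integral_mono_of_nonneg (Eventually.of_forall fun x => ?_) hint.integrableOn ?_
        · simp only [Pi.zero_apply]; positivity
        · filter_upwards [ae_restrict_mem hsm] with x hx
          have h1 : 1 < ‖x‖ := by simpa [hs] using hx
          rw [abs_det_inv0, isq_isq, smul_eq_mul, mul_pow, ← mul_assoc]
          have : isq x ^ 3 * isq (isq x • x) ^ 2 = (‖x‖ ^ 2)⁻¹ := by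
            rw [isq.eq_1 (isq x • x), norm_isq_smul, isq]
            field_simp
          rw [this]
          apply mul_le_of_le_one_left (by positivity)
          exact inv_le_one_of_one_le₀ (one_le_pow₀ h1.le)
    _ ≤ ∫ x in (ball (0 : E3) 1)ᶜ, ‖fderiv ℝ u x‖ ^ 2 := by
        refine setIntegral_mono_set hint.integrableOn (Eventually.of_forall fun x => by
          simp only [Pi.zero_apply]; positivity) ?_
        exact (Set.compl_subset_compl.2 ball_subset_closedBall).eventuallyLE

/-- Smoothed reflection across the unit sphere. -/
def psi (δ : ℝ) (x : E3) : E3 := smax δ (isq x) • x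

/-- The derivative of `psi`. -/
def psiD (δ : ℝ) (x : E3) : E3 →L[ℝ] E3 :=
  smax δ (isq x) • ContinuousLinearMap.id ℝ E3 + (smaxD δ (isq x) • isqD x).smulRight x

/-- The extended function. -/
def vext (δ : ℝ) (u : E3 → ℝ) (x : E3) : ℝ := open Classical in if x = 0 then 0 else u (psi δ x)

lemma hasFDerivAt_psi {δ : ℝ} (hδ : 0 < δ) {x : E3} (hx : x ≠ 0) :
    HasFDerivAt (psi δ) (psiD δ x) x :=
  ((hasDerivAt_smax hδ (isq x)).comp_hasFDerivAt x (hasFDerivAt_isq hx)).smul (hasFDerivAt_id x)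

lemma norm_le_psi (δ : ℝ) (x : E3) : ‖x‖ ≤ ‖psi δ x‖ := by
  have := one_le_smax δ (isq x)
  rw [psi, norm_smul, Real.norm_of_nonneg (by linarith)]
  exact le_mul_of_one_le_left (norm_nonneg _) this

lemma inv_norm_le_psi (δ : ℝ) (x : E3) : ‖x‖⁻¹ ≤ ‖psi δ x‖ := by
  have := one_le_smax δ (isq x)
  rw [← norm_isq_smul, psi, norm_smul, norm_smul,
    Real.norm_of_nonneg (isq_nonneg x),
    Real.norm_of_nonneg (by linarith : 0 ≤ smax δ (isq x))]
  exact mul_le_mul_of_nonneg_right (le_smax _ _) (norm_nonneg _)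

lemma norm_psiD_le {δ : ℝ} (hδ : 0 < δ) (h1 : δ ≤ 1) (x : E3) : ‖psiD δ x‖ ≤ 2 + 3 * isq x := by
  unfold psiD
  have h2 := one_le_smax δ (isq x)
  have h3 : ‖smax δ (isq x) • ContinuousLinearMap.id ℝ E3‖ ≤ 2 + isq x := by
    rw [norm_smul, Real.norm_of_nonneg (by linarith)]
    calc _ ≤ smax δ (isq x) * 1 :=
          mul_le_mul_of_nonneg_left ContinuousLinearMap.norm_id_le (by linarith)
      _ ≤ _ := by rw [mul_one]; exact smax_le hδ h1 (isq_nonneg x)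
  have h4 : ‖(smaxD δ (isq x) • isqD x).smulRight x‖ ≤ 2 * isq x := by
    rw [ContinuousLinearMap.norm_smulRight_apply, norm_smul, Real.norm_eq_abs, mul_assoc]
    calc _ ≤ 1 * (‖isqD x‖ * ‖x‖) :=
          mul_le_mul_of_nonneg_right (abs_smaxD_le hδ _) (by positivity)
      _ ≤ _ := by rw [one_mul]; exact norm_isqD_mul x
  refine (norm_add_le _ _).trans ?_
  linarith

lemma fderiv_vext {δ : ℝ} (hδ : 0 < δ) {u : E3 → ℝ} (hu : ContDiff ℝ 1 u) {x : E3} (hx : x ≠ 0) :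
    fderiv ℝ (vext δ u) x = (fderiv ℝ u (psi δ x)).comp (psiD δ x) := by
  have h1 : HasFDerivAt (u ∘ psi δ) ((fderiv ℝ u (psi δ x)).comp (psiD δ x)) x :=
    ((hu.differentiable one_ne_zero) _).hasFDerivAt.comp x (hasFDerivAt_psi hδ hx)
  refine (h1.congr_of_eventuallyEq ?_).fderiv
  filter_upwards [isOpen_ne.mem_nhds hx] with y hy
  exact if_neg hy

lemma contDiff_vext {δ : ℝ} (hδ : 0 < δ) {u : E3 → ℝ} (hu : ContDiff ℝ 1 u) {R : ℝ} (hR : 0 < R)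
    (hsupp : ∀ x, R ≤ ‖x‖ → u x = 0) : ContDiff ℝ 1 (vext δ u) := by
  rw [contDiff_iff_contDiffAt]
  intro x
  rcases eq_or_ne x 0 with rfl | hx
  · have : vext δ u =ᶠ[𝓝 0] fun _ => 0 := by
      filter_upwards [ball_mem_nhds (0 : E3) (inv_pos.2 hR)] with y hy
      by_cases h : y = 0
      · exact if_pos h
      · refine (if_neg h).trans (hsupp _ (le_trans ?_ (inv_norm_le_psi δ y)))
        have hy' : ‖y‖ < R⁻¹ := by simpa using hy
        exact ((lt_inv_comm₀ (norm_pos_iff.2 h) hR).1 hy').le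
    exact contDiffAt_const.congr_of_eventuallyEq this
  · have h1 : ContDiffAt ℝ 1 isq x :=
      (contDiff_norm_sq ℝ).contDiffAt.inv (by simpa using hx)
    have h2 : ContDiffAt ℝ 1 (psi δ) x := by
      unfold psi smax
      refine ContDiffAt.smul (ContDiffAt.div_const (ContDiffAt.add (contDiffAt_const.add h1)
        (ContDiffAt.sqrt (((contDiffAt_const.sub h1).pow 2).add contDiffAt_const)
          (smax_pos_arg hδ (isq x)).ne')) _) contDiffAt_id
    refine (hu.contDiffAt.comp x h2).congr_of_eventuallyEq ?_
    filter_upwards [isOpen_ne.mem_nhds hx] with y hy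
    exact if_neg hy

lemma vext_eq_zero {δ : ℝ} {u : E3 → ℝ} {R : ℝ}
    (hsupp : ∀ x, R ≤ ‖x‖ → u x = 0) (x : E3) (hx : R ≤ ‖x‖) : vext δ u x = 0 := by
  unfold vext
  split_ifs
  · rfl
  · exact hsupp _ (hx.trans (norm_le_psi δ x))

/-- The pointwise limit of the gradient densities. -/
def limG (u : E3 → ℝ) (x : E3) : ℝ := open Classical in
  if x ∈ ball (0 : E3) 1 then (isq x * ‖fderiv ℝ u (isq x • x)‖) ^ 2 else ‖fderiv ℝ u x‖ ^ 2

lemma tendsto_fderiv_vext {δ : ℕ → ℝ} (hpos : ∀ n, 0 < δ n) (hδ : Tendsto δ atTop (𝓝 0))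
    {u : E3 → ℝ} (hu : ContDiff ℝ 1 u) {x : E3} (hx : x ≠ 0) (hx1 : ‖x‖ ≠ 1) :
    Tendsto (fun n => ‖fderiv ℝ (vext (δ n) u) x‖ ^ 2) atTop (𝓝 (limG u x)) := by
  have hx0 : 0 < ‖x‖ := norm_pos_iff.2 hx
  have hcont := hu.continuous_fderiv one_ne_zero
  have ha1 : isq x ≠ 1 := by
    unfold isq
    intro h
    rw [inv_eq_one] at h
    exact hx1 ((pow_eq_one_iff_of_nonneg hx0.le two_ne_zero).1 h)
  have t1 := tendsto_smax hδ (isq x)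
  have t2 := tendsto_smaxD hδ ha1
  have t3 : Tendsto (fun n => fderiv ℝ u (psi (δ n) x)) atTop
      (𝓝 (fderiv ℝ u (max 1 (isq x) • x))) :=
    (hcont.tendsto _).comp (t1.smul_const x)
  have t4 : Tendsto (fun n => psiD (δ n) x) atTop
      (𝓝 (max 1 (isq x) • ContinuousLinearMap.id ℝ E3 +
        (if isq x < 1 then (0 : ℝ) else 1) • (isqD x).smulRight x)) := by
    have := (t1.smul_const (ContinuousLinearMap.id ℝ E3)).add
      (t2.smul_const ((isqD x).smulRight x))
    refine this.congr fun n => ?_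
    unfold psiD
    congr 1
    ext y
    simp [mul_assoc]
  have t5 := (((isBoundedBilinearMap_comp (𝕜 := ℝ) (E := E3) (F := E3) (G := ℝ)).continuous.tendsto
    (_, _)).comp (t3.prodMk_nhds t4)).norm.pow 2
  simp only [fderiv_vext (hpos _) hu hx]
  suffices hlim : limG u x = ‖(fderiv ℝ u (max 1 (isq x) • x)).comp
      (max 1 (isq x) • ContinuousLinearMap.id ℝ E3 +
        (if isq x < 1 then (0 : ℝ) else 1) • (isqD x).smulRight x)‖ ^ 2 by
    rw [hlim]
    exact t5
  unfold limG
  by_cases h : x ∈ ball (0 : E3) 1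
  · have h' : ‖x‖ < 1 := by simpa using h
    have h1 : 1 < isq x := by
      unfold isq
      exact (one_lt_inv₀ (by positivity)).2 (pow_lt_one₀ hx0.le h' two_ne_zero)
    rw [if_pos h, if_neg h1.not_gt, max_eq_right h1.le, one_smul, inv0_deriv_eq hx, norm_comp_inv0]
  · have h' : 1 ≤ ‖x‖ := by simpa using h
    have h1 : isq x < 1 := by
      refine lt_of_le_of_ne ?_ ha1
      exact inv_le_one_of_one_le₀ (one_le_pow₀ h')
    rw [if_neg h, if_pos h1, max_eq_left h1.le, one_smul]
    have hz : (1 : ℝ) • ContinuousLinearMap.id ℝ E3 + (0 : ℝ) • (isqD x).smulRight x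
        = ContinuousLinearMap.id ℝ E3 := by
      ext y
      simp
    rw [hz, ContinuousLinearMap.comp_id]

lemma integral_limG_le (u : E3 → ℝ) (hu : ContDiff ℝ 1 u) (husupp : HasCompactSupport u) :
    ∫ x, limG u x ≤ 2 * ∫ x in (ball (0 : E3) 1)ᶜ, ‖fderiv ℝ u x‖ ^ 2 := by
  by_cases hi : Integrable (limG u) volume
  · rw [← integral_add_compl (measurableSet_ball (x := (0 : E3)) (ε := 1)) hi,
      setIntegral_congr_fun (f := limG u) (g := fun x => (isq x * ‖fderiv ℝ u (isq x • x)‖) ^ 2)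
        measurableSet_ball (fun x hx => if_pos hx),
      setIntegral_congr_fun (f := limG u) (g := fun x => ‖fderiv ℝ u x‖ ^ 2)
        measurableSet_ball.compl (fun x hx => if_neg hx)]
    linarith [inversion_energy u hu husupp]
  · rw [integral_undef hi]
    positivity

lemma tendsto_energy {δ : ℕ → ℝ} (hpos : ∀ n, 0 < δ n) (hle : ∀ n, δ n ≤ 1)
    (hδ : Tendsto δ atTop (𝓝 0))
    {u : E3 → ℝ} (hu : ContDiff ℝ 1 u) (husupp : HasCompactSupport u) {R : ℝ} (hR : 0 < R)
    (hsupp : ∀ x, R ≤ ‖x‖ → u x = 0) (hsupp' : ∀ x, R ≤ ‖x‖ → fderiv ℝ u x = 0) :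
    Tendsto (fun n => ∫ x, ‖fderiv ℝ (vext (δ n) u) x‖ ^ 2) atTop (𝓝 (∫ x, limG u x)) := by
  have hcont := hu.continuous_fderiv one_ne_zero
  obtain ⟨C, hC⟩ := (husupp.fderiv (𝕜 := ℝ)).exists_bound_of_continuous hcont
  have hC0 : 0 ≤ C := (norm_nonneg _).trans (hC 0)
  have hne : ∀ᵐ x : E3, x ≠ 0 := by
    rw [ae_iff]; simp
  have hsph : ∀ᵐ x : E3, ‖x‖ ≠ 1 := by
    rw [ae_iff]
    have := Measure.addHaar_sphere (volume : Measure E3) 0 1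
    convert this using 2
    ext x; simp
  refine tendsto_integral_of_dominated_convergence
    ((closedBall (0 : E3) R).indicator fun _ => (C * (2 + 3 * R ^ 2)) ^ 2) ?_ ?_ ?_ ?_
  · intro n
    exact ((((contDiff_vext (hpos n) hu hR hsupp).continuous_fderiv
      one_ne_zero).norm).pow 2).aestronglyMeasurable
  · refine IntegrableOn.integrable_indicator ?_ measurableSet_closedBall
    exact continuousOn_const.integrableOn_compact (isCompact_closedBall _ _)
  · intro n
    filter_upwards [hne] with x hx
    have hx0 : 0 < ‖x‖ := norm_pos_iff.2 hx
    rw [fderiv_vext (hpos n) hu hx, Real.norm_of_nonneg (by positivity)]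
    have hnn : 0 ≤ (closedBall (0 : E3) R).indicator (fun _ => (C * (2 + 3 * R ^ 2)) ^ 2) x :=
      Set.indicator_nonneg (fun _ _ => by positivity) x
    by_cases h : R ≤ ‖psi (δ n) x‖
    · rw [hsupp' _ h]
      simpa using hnn
    · push Not at h
      have h1 : ‖x‖ < R := (norm_le_psi _ _).trans_lt h
      have h2 : ‖x‖⁻¹ < R := (inv_norm_le_psi _ _).trans_lt h
      rw [Set.indicator_of_mem (by simpa using h1.le)]
      refine pow_le_pow_left₀ (norm_nonneg _) ?_ 2
      refine (ContinuousLinearMap.opNorm_comp_le _ _).trans ?_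
      refine mul_le_mul (hC _) ((norm_psiD_le (hpos n) (hle n) x).trans ?_) (norm_nonneg _) hC0
      have : isq x ≤ R ^ 2 := by
        unfold isq
        rw [← inv_pow]
        exact pow_le_pow_left₀ (by positivity) h2.le 2
      linarith
  · filter_upwards [hne, hsph] with x hx hx1
    exact tendsto_fderiv_vext hpos hδ hu hx hx1

lemma tendsto_L6 {δ : ℕ → ℝ} (hpos : ∀ n, 0 < δ n)
    (hδ : Tendsto δ atTop (𝓝 0))
    {u : E3 → ℝ} (hu : ContDiff ℝ 1 u) (husupp : HasCompactSupport u) {R : ℝ} (hR : 0 < R)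
    (hsupp : ∀ x, R ≤ ‖x‖ → u x = 0) :
    Tendsto (fun n => ∫ x in (ball (0 : E3) 1)ᶜ, |vext (δ n) u x| ^ (6 : ℝ)) atTop
      (𝓝 (∫ x in (ball (0 : E3) 1)ᶜ, |u x| ^ (6 : ℝ))) := by
  obtain ⟨C, hC⟩ := husupp.exists_bound_of_continuous hu.continuous
  have hC0 : 0 ≤ C := (norm_nonneg _).trans (hC 0)
  refine tendsto_integral_of_dominated_convergence
    ((closedBall (0 : E3) R).indicator fun _ => C ^ (6 : ℝ)) ?_ ?_ ?_ ?_
  · intro n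
    have := (contDiff_vext (hpos n) hu hR hsupp).continuous
    exact (this.abs.rpow_const (fun _ => Or.inr (by norm_num))).aestronglyMeasurable
  · refine Integrable.integrableOn (IntegrableOn.integrable_indicator ?_ measurableSet_closedBall)
    exact continuousOn_const.integrableOn_compact (isCompact_closedBall _ _)
  · intro n
    refine Eventually.of_forall fun x => ?_
    rw [Real.norm_of_nonneg (by positivity)]
    by_cases h : R ≤ ‖x‖
    · rw [vext_eq_zero hsupp x h, abs_zero, Real.zero_rpow (by norm_num)]
      exact Set.indicator_nonneg (fun _ _ => by positivity) x
    · push Not at h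
      rw [Set.indicator_of_mem (by simpa using h.le)]
      refine Real.rpow_le_rpow (abs_nonneg _) ?_ (by norm_num)
      unfold vext
      split_ifs
      · simpa using hC0
      · exact hC _
  · filter_upwards [ae_restrict_mem measurableSet_ball.compl] with x hx
    have h' : 1 ≤ ‖x‖ := by simpa using hx
    have hx0 : x ≠ 0 := norm_pos_iff.1 (by linarith)
    have h1 : isq x ≤ 1 := inv_le_one_of_one_le₀ (one_le_pow₀ h')
    have t1 := (tendsto_smax hδ (isq x)).smul_const x
    rw [max_eq_left h1, one_smul] at t1
    have t2 := (((hu.continuous.tendsto _).comp t1).abs).rpow_const (p := 6) (Or.inr (by norm_num))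
    refine t2.congr fun n => ?_
    simp [vext, psi, hx0]

/-- **Exterior Sobolev inequality** (Appendix, Theorem 5.2):
If `A > 0` is a Sobolev constant for `ℝ³`, i.e. `‖v‖_{L⁶(ℝ³)} ≤ A ‖∇v‖_{L²(ℝ³)}` for all
`C¹` compactly supported `v`, then on `M = ℝ³ \ B(0,1)` one has
`‖u‖_{L⁶(M)} ≤ 2(2+√2) A ‖∇u‖_{L²(M)}` for every `C¹` compactly supported `u`. -/
theorem exterior_sobolev_inequality
    (A : ℝ) (hA : 0 < A)
    (hSob : ∀ v : E3 → ℝ, ContDiff ℝ 1 v → HasCompactSupport v →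
      (∫ x, |v x| ^ (6 : ℝ)) ^ ((1 : ℝ) / 6) ≤
        A * (∫ x, ‖fderiv ℝ v x‖ ^ (2 : ℝ)) ^ ((1 : ℝ) / 2))
    (u : E3 → ℝ) (hu : ContDiff ℝ 1 u) (husupp : HasCompactSupport u) :
    (∫ x in (ball (0 : E3) 1)ᶜ, |u x| ^ (6 : ℝ)) ^ ((1 : ℝ) / 6) ≤
      2 * (2 + Real.sqrt 2) * A *
        (∫ x in (ball (0 : E3) 1)ᶜ, ‖fderiv ℝ u x‖ ^ (2 : ℝ)) ^ ((1 : ℝ) / 2) := by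
  simp only [Real.rpow_two] at hSob ⊢
  obtain ⟨R, hR, hball⟩ : ∃ R : ℝ, 0 < R ∧ tsupport u ⊆ ball 0 R := by
    obtain ⟨R, hR⟩ := husupp.isBounded.subset_ball (0 : E3)
    exact ⟨max R 1, by positivity, hR.trans (ball_subset_ball (le_max_left _ _))⟩
  have hnot : ∀ x : E3, R ≤ ‖x‖ → x ∉ tsupport u := by
    intro x hx h
    have := hball h
    rw [mem_ball_zero_iff] at this
    linarith
  have hsupp : ∀ x, R ≤ ‖x‖ → u x = 0 := fun x hx => image_eq_zero_of_notMem_tsupport (hnot x hx)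
  have hsupp' : ∀ x, R ≤ ‖x‖ → fderiv ℝ u x = 0 := fun x hx =>
    fderiv_of_notMem_tsupport ℝ (hnot x hx)
  let δ : ℕ → ℝ := fun n => 1 / ((n : ℝ) + 1)
  have hpos : ∀ n, 0 < δ n := fun n => by simp only [δ]; positivity
  have hle : ∀ n, δ n ≤ 1 := fun n => by
    simp only [δ]
    rw [div_le_one (by positivity)]
    linarith [(Nat.cast_nonneg n : (0 : ℝ) ≤ n)]
  have hδ : Tendsto δ atTop (𝓝 0) := tendsto_one_div_add_atTop_nhds_zero_nat
  have tL := (tendsto_L6 hpos hδ hu husupp hR hsupp).rpow_const (p := (1 : ℝ) / 6)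
    (Or.inr (by norm_num))
  have tR := ((tendsto_energy hpos hle hδ hu husupp hR hsupp hsupp').rpow_const (p := (1 : ℝ) / 2)
    (Or.inr (by norm_num))).const_mul A
  have key := le_of_tendsto_of_tendsto' tL tR (fun n => by
    have hc := contDiff_vext (hpos n) hu hR hsupp
    have hcs : HasCompactSupport (vext (δ n) u) :=
      HasCompactSupport.of_support_subset_isCompact (isCompact_closedBall (0 : E3) R) (by
        intro x hx
        by_contra h
        exact hx (vext_eq_zero hsupp x (by
          simp only [mem_closedBall_zero_iff, not_le] at h
          exact h.le)))
    refine le_trans ?_ (hSob _ hc hcs)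
    refine Real.rpow_le_rpow (by positivity) ?_ (by norm_num)
    refine setIntegral_le_integral ?_ (Eventually.of_forall fun x => by
      simp only [Pi.zero_apply]; positivity)
    refine (hc.continuous.abs.rpow_const
      (fun _ => Or.inr (by norm_num))).integrable_of_hasCompactSupport ?_
    exact hcs.comp_left (g := fun t : ℝ => |t| ^ (6 : ℝ)) (by simp))
  refine key.trans ?_
  set I := ∫ x in (ball (0 : E3) 1)ᶜ, ‖fderiv ℝ u x‖ ^ 2 with hI
  have hI0 : 0 ≤ I := by positivity
  have hG0 : 0 ≤ ∫ x, limG u x := integral_nonneg fun x => by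
    simp only [Pi.zero_apply, limG]; split_ifs <;> positivity
  have h1 : (∫ x, limG u x) ^ ((1 : ℝ) / 2) ≤ Real.sqrt 2 * I ^ ((1 : ℝ) / 2) := by
    rw [Real.sqrt_eq_rpow, ← Real.mul_rpow (by norm_num) hI0]
    exact Real.rpow_le_rpow hG0 (integral_limG_le u hu husupp) (by norm_num)
  have h2 : 0 ≤ I ^ ((1 : ℝ) / 2) := by positivity
  have h3 : 0 ≤ Real.sqrt 2 := Real.sqrt_nonneg 2
  calc A * (∫ x, limG u x) ^ ((1 : ℝ) / 2) ≤ A * (Real.sqrt 2 * I ^ ((1 : ℝ) / 2)) :=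
        mul_le_mul_of_nonneg_left h1 hA.le
    _ = Real.sqrt 2 * (A * I ^ ((1 : ℝ) / 2)) := by ring
    _ ≤ (2 * (2 + Real.sqrt 2)) * (A * I ^ ((1 : ℝ) / 2)) :=
        mul_le_mul_of_nonneg_right (by linarith) (by positivity)
    _ = _ := by ring
end
end

section
/- Let b > 0, let B = B(0,b) be the open ball of radius b centered at 0 in ℝ³, and let M = ℝ³ \ B. Let u : ℝ³ → ℝ be continuously differentiable with compact support, and let α ≥ 1. Define u_α on B \ {0} by u_α(x) = u(b^{α+1}·|x|^{−α−1}·x) (in spherical coordinates, u_α(r,θ,φ) = u(b^{α+1} r^{−α}, θ, φ)); since u has compact support, u_α vanishes in a punctured neighborhood of 0 and extends by 0 to a continuously differentiable function on B. Then ∫_B |∇u_α|² dx ≤ α · ∫_M |∇u|² dx. -/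
open MeasureTheory Metric Real Classical

noncomputable section

/-- scalar factor -/
def rlam (b α : ℝ) (y : E3) : ℝ := b ^ (α + 1) * ‖y‖ ^ (-(α + 1))

/-- the reflection -/
def rT (b α : ℝ) (y : E3) : E3 := rlam b α y • y

/-- its derivative -/
def rTder (b α : ℝ) (x : E3) : E3 →L[ℝ] E3 :=
  rlam b α x • (ContinuousLinearMap.id ℝ E3 +
    ((-(α + 1) / ‖x‖ ^ 2) • (innerSL ℝ x)).smulRight x)

theorem rlam_hasFDerivAt (b α : ℝ) (x : E3) (hx : x ≠ 0) :
    HasFDerivAt (rlam b α) ((rlam b α x * (-(α + 1) / ‖x‖ ^ 2)) • innerSL ℝ x) x := by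
  have hn : 0 < ‖x‖ := norm_pos_iff.mpr hx
  have h := ((hasStrictFDerivAt_norm_sq x).hasFDerivAt.rpow_const (p := -(α + 1) / 2)
    (Or.inl (by positivity))).const_mul (b ^ (α + 1))
  have e : ∀ y : E3, (‖y‖ ^ 2) ^ (-(α + 1) / 2) = ‖y‖ ^ (-(α + 1)) := by
    intro y
    rw [← Real.rpow_natCast_mul (norm_nonneg _)]
    congr 1
    push_cast
    ring
  have e2 : (‖x‖ ^ 2) ^ (-(α + 1) / 2 - 1) = ‖x‖ ^ (-(α + 1)) / ‖x‖ ^ 2 := by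
    rw [Real.rpow_sub_one (by positivity), e]
  simp only [e, e2] at h
  convert! h using 1
  ext v
  simp [rlam]
  ring

theorem rT_hasFDerivAt (b α : ℝ) (x : E3) (hx : x ≠ 0) :
    HasFDerivAt (rT b α) (rTder b α x) x := by
  have h := (rlam_hasFDerivAt b α x hx).smul (hasFDerivAt_id x)
  convert! h using 1
  ext1 v
  simp [rTder, smul_add, smul_smul, mul_assoc]

theorem rTder_det (b α : ℝ) (x : E3) (hx : x ≠ 0) :
    (rTder b α x).det = -(α * rlam b α x ^ 3) := by
  have hn : 0 < ‖x‖ := norm_pos_iff.mpr hx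
  have e : ((rTder b α x : E3 →L[ℝ] E3) : E3 →ₗ[ℝ] E3) = rlam b α x •
      LinearMap.transvection
        (((-(α + 1) / ‖x‖ ^ 2) • (innerSL ℝ x) : E3 →L[ℝ] ℝ) : E3 →ₗ[ℝ] ℝ) x := by
    ext1 v
    simp [rTder, LinearMap.transvection.apply]
  rw [ContinuousLinearMap.det, e, LinearMap.det_smul, LinearMap.transvection.det]
  simp
  field_simp
  ring

theorem rlam_pos (b α : ℝ) (hb : 0 < b) (x : E3) (hx : x ≠ 0) : 0 < rlam b α x := by
  have hn : 0 < ‖x‖ := norm_pos_iff.mpr hx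
  unfold rlam
  positivity

theorem rTder_norm (b α : ℝ) (hb : 0 < b) (hα : 1 ≤ α) (x : E3) (hx : x ≠ 0) :
    ‖rTder b α x‖ ≤ α * rlam b α x := by
  have hn : 0 < ‖x‖ := norm_pos_iff.mpr hx
  have hl := rlam_pos b α hb x hx
  refine ContinuousLinearMap.opNorm_le_bound _ (by positivity) fun h => ?_
  have e : rTder b α x h = rlam b α x • (h + ((-(α + 1) / ‖x‖ ^ 2) * inner ℝ x h) • x) := by
    simp [rTder]
  rw [e, norm_smul, Real.norm_of_nonneg hl.le, mul_comm α, mul_assoc]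
  refine mul_le_mul_of_nonneg_left ?_ hl.le
  refine abs_le_of_sq_le_sq' ?_ (by positivity) |>.2
  rw [norm_add_sq_real, norm_smul, inner_smul_right, real_inner_comm x h, mul_pow, Real.norm_eq_abs,
    sq_abs]
  have hcs : (inner ℝ x h) ^ 2 ≤ ‖x‖ ^ 2 * ‖h‖ ^ 2 := by
    rw [← mul_pow, sq_le_sq, abs_of_nonneg (by positivity : 0 ≤ ‖x‖ * ‖h‖)]
    exact abs_real_inner_le_norm x h
  set t := inner ℝ x h
  have e3 : ‖h‖ ^ 2 + 2 * (-(α + 1) / ‖x‖ ^ 2 * t * t) +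
      (-(α + 1) / ‖x‖ ^ 2 * t) ^ 2 * ‖x‖ ^ 2 = ‖h‖ ^ 2 + (α ^ 2 - 1) * (t ^ 2 / ‖x‖ ^ 2) := by
    field_simp
    ring
  rw [e3]
  have h4 : t ^ 2 / ‖x‖ ^ 2 ≤ ‖h‖ ^ 2 := by
    rw [div_le_iff₀ (by positivity)]
    linarith
  have h5 : 0 ≤ α ^ 2 - 1 := by nlinarith
  nlinarith [mul_le_mul_of_nonneg_left h4 h5]

theorem rlam_eq (b α : ℝ) (hb : 0 < b) (x : E3) :
    rlam b α x = (b / ‖x‖) ^ (α + 1) := by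
  rw [rlam, Real.div_rpow hb.le (norm_nonneg _), Real.rpow_neg (norm_nonneg _), div_eq_mul_inv]

theorem one_le_rlam (b α : ℝ) (hb : 0 < b) (hα : 1 ≤ α) (x : E3) (hx : x ≠ 0) (hxb : ‖x‖ < b) :
    1 ≤ rlam b α x := by
  have hn : 0 < ‖x‖ := norm_pos_iff.mpr hx
  rw [rlam_eq b α hb]
  exact Real.one_le_rpow ((one_le_div hn).2 hxb.le) (by linarith)

theorem rT_norm (b α : ℝ) (hb : 0 < b) (x : E3) (hx : x ≠ 0) :
    ‖rT b α x‖ = (b / ‖x‖) ^ α * b := by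
  have hn : 0 < ‖x‖ := norm_pos_iff.mpr hx
  rw [rT, norm_smul, Real.norm_of_nonneg (rlam_pos b α hb x hx).le, rlam_eq b α hb,
    Real.rpow_add_one (by positivity)]
  field_simp

theorem rT_injOn (b α : ℝ) (hb : 0 < b) (hα : 1 ≤ α) : Set.InjOn (rT b α) (ball 0 b \ {0}) := by
  intro x hx y hy h
  have hx0 : x ≠ 0 := hx.2
  have hy0 : y ≠ 0 := hy.2
  have hxn : 0 < ‖x‖ := norm_pos_iff.mpr hx0
  have hyn : 0 < ‖y‖ := norm_pos_iff.mpr hy0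
  have h1 := congrArg norm h
  rw [rT_norm b α hb x hx0, rT_norm b α hb y hy0] at h1
  have h2 := mul_right_cancel₀ hb.ne' h1
  rw [Real.rpow_left_inj (by positivity) (by positivity) (by linarith)] at h2
  have h3 : rlam b α x = rlam b α y := by rw [rlam_eq b α hb, rlam_eq b α hb, h2]
  simp only [rT, h3] at h
  exact smul_right_injective E3 (rlam_pos b α hb y hy0).ne' h

theorem rT_image (b α : ℝ) (hb : 0 < b) (hα : 1 ≤ α) :
    rT b α '' (ball 0 b \ {0}) ⊆ (ball 0 b)ᶜ := by
  rintro _ ⟨x, hx, rfl⟩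
  have hx0 : x ≠ 0 := hx.2
  have hxn : 0 < ‖x‖ := norm_pos_iff.mpr hx0
  have hxb : ‖x‖ < b := by simpa using hx.1
  simp only [Set.mem_compl_iff, mem_ball, dist_zero_right, not_lt]
  rw [rT_norm b α hb x hx0]
  exact le_mul_of_one_le_left hb.le
    (Real.one_le_rpow ((one_le_div hxn).2 hxb.le) (by linarith))

/-- **Reflection estimate** (Appendix, Lemma 5.1): for `b > 0`, `α ≥ 1` and a `C¹` compactly
supported `u : ℝ³ → ℝ`, the reflected function `u_α(x) = u(b^{α+1} |x|^{-α-1} x)` (extended by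
`0` at the origin) satisfies `∫_B |∇u_α|² ≤ α ∫_M |∇u|²`, where `B = B(0,b)` and
`M = ℝ³ \ B`. -/
theorem reflection_estimate
    (b : ℝ) (hb : 0 < b) (α : ℝ) (hα : 1 ≤ α)
    (u : E3 → ℝ) (hu : ContDiff ℝ 1 u) (husupp : HasCompactSupport u) :
    (∫ x in ball (0 : E3) b,
        ‖fderiv ℝ
          (fun y : E3 => if y = 0 then 0 else u ((b ^ (α + 1) * ‖y‖ ^ (-(α + 1))) • y)) x‖
          ^ (2 : ℝ)) ≤
      α * ∫ x in (ball (0 : E3) b)ᶜ, ‖fderiv ℝ u x‖ ^ (2 : ℝ) := by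
  set v : E3 → ℝ :=
    fun y : E3 => if y = 0 then 0 else u ((b ^ (α + 1) * ‖y‖ ^ (-(α + 1))) • y) with hv
  simp only [Real.rpow_two]
  set s : Set E3 := ball 0 b \ {0} with hs
  have hsm : MeasurableSet s := measurableSet_ball.diff (measurableSet_singleton 0)
  have hder : ∀ x ∈ s, HasFDerivWithinAt (rT b α) (rTder b α x) s x :=
    fun x hx => (rT_hasFDerivAt b α x hx.2).hasFDerivWithinAt
  have hinj := rT_injOn b α hb hα
  have hgi : Integrable (fun x => ‖fderiv ℝ u x‖ ^ 2) := by
    have hc : Continuous (fderiv ℝ u) := hu.continuous_fderiv (by norm_num)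
    refine Continuous.integrable_of_hasCompactSupport (hc.norm.pow 2) ?_
    exact (husupp.fderiv ℝ).comp_left (g := fun L : E3 →L[ℝ] ℝ => ‖L‖ ^ 2) (by simp)
  have hae : (ball (0 : E3) b : Set E3) =ᵐ[volume] s :=
    (sdiff_null_ae_eq_self (measure_singleton 0)).symm
  rw [setIntegral_congr_set hae]
  calc ∫ x in s, ‖fderiv ℝ v x‖ ^ 2
      ≤ ∫ x in s, α * (|(rTder b α x).det| • ‖fderiv ℝ u (rT b α x)‖ ^ 2) := by
        refine integral_mono_of_nonneg (Filter.Eventually.of_forall fun x => by positivity)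
          (Integrable.const_mul
            ((integrableOn_image_iff_integrableOn_abs_det_fderiv_smul volume hsm hder hinj
              (fun x => ‖fderiv ℝ u x‖ ^ 2)).1 hgi.integrableOn) α) ?_
        refine (ae_restrict_iff' hsm).2 (Filter.Eventually.of_forall fun x hx => ?_)
        have hx0 : x ≠ 0 := hx.2
        have hxb : ‖x‖ < b := by simpa using hx.1
        have hl := one_le_rlam b α hb hα x hx0 hxb
        have hvd : fderiv ℝ v x = (fderiv ℝ u (rT b α x)).comp (rTder b α x) := by
          have h1 : v =ᶠ[nhds x] u ∘ rT b α := by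
            filter_upwards [isOpen_ne.mem_nhds hx0] with y hy
            simp only [hv, Function.comp, rT, rlam]
            rw [if_neg hy]
          rw [h1.fderiv_eq]
          exact (((hu.differentiable (by norm_num)) _).hasFDerivAt.comp x
            (rT_hasFDerivAt b α x hx0)).fderiv
        have hle : ‖fderiv ℝ v x‖ ≤ ‖fderiv ℝ u (rT b α x)‖ * (α * rlam b α x) := by
          rw [hvd]
          exact (ContinuousLinearMap.opNorm_comp_le _ _).trans
            (mul_le_mul_of_nonneg_left (rTder_norm b α hb hα x hx0) (norm_nonneg _))
        have hdet : |(rTder b α x).det| = α * rlam b α x ^ 3 := by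
          rw [rTder_det b α x hx0, abs_neg, abs_of_nonneg (by positivity)]
        simp only [hdet, smul_eq_mul]
        calc ‖fderiv ℝ v x‖ ^ 2 ≤ (‖fderiv ℝ u (rT b α x)‖ * (α * rlam b α x)) ^ 2 := by gcongr
          _ = α ^ 2 * ‖fderiv ℝ u (rT b α x)‖ ^ 2 * rlam b α x ^ 2 := by ring
          _ ≤ α ^ 2 * ‖fderiv ℝ u (rT b α x)‖ ^ 2 * rlam b α x ^ 3 := by
            refine mul_le_mul_of_nonneg_left ?_ (by positivity)
            exact pow_le_pow_right₀ hl (by norm_num)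
          _ = _ := by ring
    _ = α * ∫ x in rT b α '' s, ‖fderiv ℝ u x‖ ^ 2 := by
        rw [integral_const_mul,
          integral_image_eq_integral_abs_det_fderiv_smul volume hsm hder hinj]
    _ ≤ _ := by
        refine mul_le_mul_of_nonneg_left ?_ (by linarith)
        exact setIntegral_mono_set hgi.integrableOn
          (Filter.Eventually.of_forall fun x => by positivity)
          (rT_image b α hb hα).eventuallyLE
end
end

section
/- Let b > 0, let B = B(0,b) be the open ball of radius b in ℝ³, and let M = ℝ³ \ B. Let u : ℝ³ → ℝ be continuously differentiable with compact support. Define ũ : ℝ³ → ℝ by ũ(x) = u(x) for |x| ≥ b, ũ(x) = 3u(b²·x/|x|²) − 2u(b³·x/|x|³) for 0 < |x| < b, and ũ(0) = 0. Then ũ is continuously differentiable on ℝ³ with compact support, ũ agrees with u on M, and ‖∇ũ‖_{L²(ℝ³)} ≤ 2(2+√2)·‖∇u‖_{L²(M)}. -/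
open MeasureTheory Metric Real Classical

noncomputable section

def Psi (b : ℝ) (n : ℕ) (x : E3) : E3 := (b ^ n * (‖x‖ ^ n)⁻¹) • x
def PsiD (b : ℝ) (n : ℕ) (x : E3) : E3 →L[ℝ] E3 :=
  (b ^ n * (‖x‖ ^ n)⁻¹) • (ContinuousLinearMap.id ℝ E3 - ((n : ℝ) * (‖x‖ ^ 2)⁻¹) • (innerSL ℝ x).smulRight x)

lemma psiD_det (b : ℝ) (n : ℕ) (x : E3) (hx : x ≠ 0) :
    (PsiD b n x).det = (b ^ n * (‖x‖ ^ n)⁻¹) ^ 3 * (1 - n) := by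
  have h : ((PsiD b n x : E3 →L[ℝ] E3) : E3 →ₗ[ℝ] E3) = (b ^ n * (‖x‖ ^ n)⁻¹) •
      LinearMap.transvection ((innerSL ℝ x : E3 →L[ℝ] ℝ) : E3 →ₗ[ℝ] ℝ) ((-((n : ℝ) * (‖x‖ ^ 2)⁻¹)) • x) := by
    ext v i
    simp [PsiD, LinearMap.transvection]
    ring
  have hx' : ‖x‖ ≠ 0 := norm_ne_zero_iff.2 hx
  rw [ContinuousLinearMap.det, h, LinearMap.det_smul, LinearMap.transvection.det]
  have hi : (innerSL ℝ x) ((-((n : ℝ) * (‖x‖ ^ 2)⁻¹)) • x) = -(n : ℝ) := by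
    rw [map_smul, innerSL_apply_apply, real_inner_self_eq_norm_sq, smul_eq_mul]
    field_simp
  rw [ContinuousLinearMap.coe_coe, hi]
  simp
  left
  ring

lemma psi_hasFDerivAt (b : ℝ) (n : ℕ) (x : E3) (hx : x ≠ 0) :
    HasFDerivAt (Psi b n) (PsiD b n x) x := by
  have hx' : ‖x‖ ≠ 0 := norm_ne_zero_iff.2 hx
  have h1 : HasFDerivAt (fun y : E3 => ‖y‖) ((‖x‖⁻¹) • innerSL ℝ x) x := by
    have h := (HasStrictFDerivAt.hasFDerivAt (hasStrictFDerivAt_norm_sq x)).sqrt (by positivity)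
    simp only [Real.sqrt_sq (norm_nonneg _)] at h
    refine h.congr_fderiv ?_
    ext v
    simp
    field_simp
  have h2 : HasDerivAt (fun r : ℝ => b ^ n * (r ^ n)⁻¹) (b ^ n * (-(n * ‖x‖ ^ (n-1)) / (‖x‖ ^ n) ^ 2)) ‖x‖ :=
    (((hasDerivAt_pow n ‖x‖)).inv (pow_ne_zero _ hx')).const_mul _
  have h3 := (h2.comp_hasFDerivAt x h1).smul (hasFDerivAt_id x)
  refine h3.congr_fderiv ?_
  ext v i
  simp [PsiD]
  rcases n with _ | n
  · simp
  · simp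
    field_simp
    ring

lemma psiD_norm (b : ℝ) (hb : 0 < b) (n : ℕ) (hn : 2 ≤ n) (x : E3) (hx : x ≠ 0) :
    ‖PsiD b n x‖ ≤ (b ^ n * (‖x‖ ^ n)⁻¹) * (n - 1) := by
  have hx' : 0 < ‖x‖ := norm_pos_iff.2 hx
  have hn' : (2 : ℝ) ≤ n := by exact_mod_cast hn
  have h0 : (0 : ℝ) ≤ n - 1 := by linarith
  refine ContinuousLinearMap.opNorm_le_bound _ (by positivity) fun v => ?_
  have : PsiD b n x v = (b ^ n * (‖x‖ ^ n)⁻¹) • (v - ((n : ℝ) * (‖x‖ ^ 2)⁻¹ * inner ℝ x v) • x) := by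
    simp [PsiD, smul_smul]
  rw [this, norm_smul, mul_assoc (b ^ n * (‖x‖ ^ n)⁻¹) ((n : ℝ) - 1), Real.norm_of_nonneg (by positivity)]
  refine mul_le_mul_of_nonneg_left ?_ (by positivity)
  refine (sq_le_sq₀ (norm_nonneg _) (mul_nonneg h0 (norm_nonneg v))).1 ?_
  rw [norm_sub_sq_real, norm_smul, inner_smul_right, mul_pow, mul_pow, Real.norm_eq_abs, sq_abs, real_inner_comm x v]
  have hc : (inner ℝ x v) ^ 2 * (‖x‖ ^ 2)⁻¹ ≤ ‖v‖ ^ 2 := by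
    have := abs_real_inner_le_norm x v
    rw [← div_eq_mul_inv, div_le_iff₀ (by positivity), ← sq_abs, ← mul_pow, mul_comm]
    gcongr
  have : (n:ℝ) * (n - 2) * ((inner ℝ x v) ^ 2 * (‖x‖ ^ 2)⁻¹) ≤ n * (n-2) * ‖v‖^2 := by
    have : (0:ℝ) ≤ n - 2 := by linarith
    gcongr
  have e : ‖v‖ ^ 2 - 2 * (↑n * (‖x‖ ^ 2)⁻¹ * inner ℝ x v * inner ℝ x v) + (↑n * (‖x‖ ^ 2)⁻¹ * inner ℝ x v) ^ 2 * ‖x‖ ^ 2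
    = ‖v‖^2 + (n:ℝ) * (n - 2) * ((inner ℝ x v) ^ 2 * (‖x‖ ^ 2)⁻¹) := by
    field_simp
    ring
  rw [e]
  nlinarith

lemma psi_norm (b : ℝ) (hb : 0 < b) (n : ℕ) (x : E3) (hx : x ≠ 0) :
    ‖Psi b (n+1) x‖ = b * (b / ‖x‖) ^ n := by
  have hx' : 0 < ‖x‖ := norm_pos_iff.2 hx
  rw [Psi, norm_smul, Real.norm_of_nonneg (by positivity), div_pow]
  field_simp
  ring

lemma psi_inj (b : ℝ) (hb : 0 < b) (n : ℕ) (hn : 2 ≤ n) : Set.InjOn (Psi b n) (ball 0 b \ {0}) := by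
  obtain ⟨n, rfl⟩ : ∃ k, n = k + 1 := ⟨n - 1, by omega⟩
  rintro x ⟨hx, hx0⟩ y ⟨hy, hy0⟩ h
  have hx' : 0 < ‖x‖ := norm_pos_iff.2 hx0
  have hy' : 0 < ‖y‖ := norm_pos_iff.2 hy0
  have h1 := congrArg norm h
  rw [psi_norm b hb _ _ hx0, psi_norm b hb _ _ hy0] at h1
  have h2 := mul_left_cancel₀ hb.ne' h1
  have h3 := (pow_left_inj₀ (by positivity) (by positivity) (by omega)).1 h2
  have h4 : ‖x‖ = ‖y‖ := by
    field_simp at h3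
    exact h3.symm
  simp only [Psi, h4] at h
  exact smul_right_injective E3 (r := (b ^ (n+1) * (‖y‖ ^ (n+1))⁻¹)) (by positivity) h

lemma psi_mem (b : ℝ) (hb : 0 < b) (n : ℕ) (hn : 2 ≤ n) (x : E3) (hx : x ∈ ball (0 : E3) b \ {0}) :
    b * (b / ‖x‖) ≤ ‖Psi b n x‖ ∧ b ≤ ‖Psi b n x‖ := by
  obtain ⟨n, rfl⟩ : ∃ k, n = k + 1 := ⟨n - 1, by omega⟩
  obtain ⟨hxb, hx0⟩ := hx
  have hx' : 0 < ‖x‖ := norm_pos_iff.2 hx0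
  rw [mem_ball_zero_iff] at hxb
  have h1 : 1 ≤ b / ‖x‖ := by rw [le_div_iff₀ hx']; linarith
  rw [psi_norm b hb _ _ hx0]
  constructor
  · gcongr
    exact le_self_pow₀ h1 (by omega)
  · exact le_mul_of_one_le_right hb.le (one_le_pow₀ h1)

lemma psi_comp (b : ℝ) (n : ℕ) (u : E3 → ℝ) (hu : ContDiff ℝ 1 u) (x : E3) (hx : x ≠ 0) :
    HasFDerivAt (fun y => u (Psi b n y)) ((fderiv ℝ u (Psi b n x)).comp (PsiD b n x)) x :=
  ((hu.differentiable (by norm_num) _).hasFDerivAt).comp x (psi_hasFDerivAt b n x hx)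

lemma psi_contDiffAt (b : ℝ) (n : ℕ) (x : E3) (hx : x ≠ 0) : ContDiffAt ℝ 1 (Psi b n) x := by
  have hx' : ‖x‖ ≠ 0 := norm_ne_zero_iff.2 hx
  unfold Psi
  exact (contDiffAt_const.mul (((contDiffAt_norm ℝ hx).pow n).inv (pow_ne_zero _ hx'))).smul contDiffAt_id

lemma psi_bound (b : ℝ) (hb : 0 < b) (n : ℕ) (hn : n = 2 ∨ n = 3) (L : E3 →L[ℝ] ℝ) (x : E3)
    (hx : x ∈ ball (0 : E3) b \ {0}) :
    ‖L.comp (PsiD b n x)‖ ^ 2 ≤ (n - 1) * (|(PsiD b n x).det| * ‖L‖ ^ 2) := by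
  obtain ⟨hxb, hx0⟩ := hx
  have hx' : 0 < ‖x‖ := norm_pos_iff.2 hx0
  rw [mem_ball_zero_iff] at hxb
  have hn2 : 2 ≤ n := by omega
  have hn' : (2 : ℝ) ≤ n := by exact_mod_cast hn2
  have h0 : (0 : ℝ) ≤ n - 1 := by linarith
  have h1 : 1 ≤ b / ‖x‖ := by rw [le_div_iff₀ hx']; linarith
  set t := b ^ n * (‖x‖ ^ n)⁻¹ with ht
  have ht1 : 1 ≤ t := by
    have : t = (b / ‖x‖) ^ n := by rw [ht, div_pow, div_eq_mul_inv]
    rw [this]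
    exact one_le_pow₀ h1
  rw [psiD_det b n x hx0, ← ht, abs_mul, abs_of_nonneg (by positivity : 0 ≤ t ^ 3),
    abs_sub_comm, abs_of_nonneg h0]
  have h2 : ‖L.comp (PsiD b n x)‖ ≤ ‖L‖ * (t * (n - 1)) :=
    (L.opNorm_comp_le _).trans (by gcongr; exact psiD_norm b hb n hn2 x hx0)
  calc _ ≤ (‖L‖ * (t * (n - 1))) ^ 2 := by gcongr
    _ = (n - 1) ^ 2 * ‖L‖ ^ 2 * t ^ 2 := by ring
    _ ≤ (n - 1) ^ 2 * ‖L‖ ^ 2 * t ^ 3 := by gcongr; norm_num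
    _ = _ := by ring

lemma psi_lint (b : ℝ) (hb : 0 < b) (n : ℕ) (hn : n = 2 ∨ n = 3) (u : E3 → ℝ) :
    ∫⁻ x in ball (0 : E3) b \ {0}, ENNReal.ofReal (‖(fderiv ℝ u (Psi b n x)).comp (PsiD b n x)‖ ^ 2)
      ≤ ENNReal.ofReal (n - 1) * ∫⁻ x in (ball (0 : E3) b)ᶜ, ENNReal.ofReal (‖fderiv ℝ u x‖ ^ 2) := by
  have hn2 : 2 ≤ n := by omega
  have hn' : (2 : ℝ) ≤ n := by exact_mod_cast hn2
  have h0 : (0 : ℝ) ≤ n - 1 := by linarith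
  have hS : MeasurableSet (ball (0 : E3) b \ {0}) := measurableSet_ball.diff (measurableSet_singleton _)
  have hcv := lintegral_image_eq_lintegral_abs_det_fderiv_mul volume hS
    (fun x hx => (psi_hasFDerivAt b n x hx.2).hasFDerivWithinAt) (psi_inj b hb n hn2)
    (fun x => ENNReal.ofReal (‖fderiv ℝ u x‖ ^ 2))
  calc _ ≤ ∫⁻ x in ball (0 : E3) b \ {0}, ENNReal.ofReal (n - 1) *
        (ENNReal.ofReal |(PsiD b n x).det| * ENNReal.ofReal (‖fderiv ℝ u (Psi b n x)‖ ^ 2)) := by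
        refine setLIntegral_mono' hS fun x hx => ?_
        rw [← ENNReal.ofReal_mul (abs_nonneg _), ← ENNReal.ofReal_mul h0]
        exact ENNReal.ofReal_le_ofReal (psi_bound b hb n hn _ x hx)
    _ = _ := lintegral_const_mul' _ _ ENNReal.ofReal_ne_top
    _ ≤ _ := by
        rw [← hcv]
        gcongr
        rintro _ ⟨x, hx, rfl⟩
        have := (psi_mem b hb n hn2 x hx).2
        simpa using this

lemma combine (a c : E3 →L[ℝ] ℝ) : ‖(3 : ℝ) • a - (2 : ℝ) • c‖ ^ 2 ≤
    (3 + 2 * √2) * 3 * ‖a‖ ^ 2 + (3 + 2 * √2) * √2 * ‖c‖ ^ 2 := by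
  have h : ‖(3 : ℝ) • a - (2 : ℝ) • c‖ ≤ 3 * ‖a‖ + 2 * ‖c‖ := by
    refine (norm_sub_le _ _).trans (by simp [norm_smul])
  have h2 : √2 ^ 2 = (2 : ℝ) := Real.sq_sqrt (by norm_num)
  have h3 : 0 < √2 := by positivity
  calc _ ≤ (3 * ‖a‖ + 2 * ‖c‖) ^ 2 := by gcongr
    _ ≤ _ := by
      have h4 : 0 ≤ 3 * √2 * (√2 * ‖a‖ - ‖c‖) ^ 2 := by positivity
      have h5 : (3 + 2 * √2) * 3 * ‖a‖ ^ 2 + (3 + 2 * √2) * √2 * ‖c‖ ^ 2 =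
          (3 * ‖a‖ + 2 * ‖c‖) ^ 2 + 3 * √2 * (√2 * ‖a‖ - ‖c‖) ^ 2 := by
        linear_combination (-3 * √2 * ‖a‖ ^ 2 + 2 * ‖c‖ ^ 2 + 6 * ‖a‖ * ‖c‖) * h2
      linarith

def Fext (b : ℝ) (u : E3 → ℝ) (x : E3) : ℝ := 3 * u (Psi b 2 x) - 2 * u (Psi b 3 x)

def FinD (b : ℝ) (u : E3 → ℝ) (x : E3) : E3 →L[ℝ] ℝ :=
  (3 : ℝ) • ((fderiv ℝ u (Psi b 2 x)).comp (PsiD b 2 x)) - (2 : ℝ) • ((fderiv ℝ u (Psi b 3 x)).comp (PsiD b 3 x))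

lemma fin_hasFDerivAt (b : ℝ) (u : E3 → ℝ) (hu : ContDiff ℝ 1 u) (x : E3) (hx : x ≠ 0) :
    HasFDerivAt (Fext b u) (FinD b u x) x :=
  ((psi_comp b 2 u hu x hx).const_mul 3).sub ((psi_comp b 3 u hu x hx).const_mul 2)

lemma fin_contDiffAt (b : ℝ) (u : E3 → ℝ) (hu : ContDiff ℝ 1 u) (x : E3) (hx : x ≠ 0) :
    ContDiffAt ℝ 1 (Fext b u) x := by
  unfold Fext
  exact (contDiffAt_const.mul (hu.contDiffAt.comp x (psi_contDiffAt b 2 x hx))).sub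
    (contDiffAt_const.mul (hu.contDiffAt.comp x (psi_contDiffAt b 3 x hx)))

lemma fin_sphere (b : ℝ) (hb : 0 < b) (u : E3 → ℝ) (x : E3) (hx : ‖x‖ = b) :
    Fext b u x = u x ∧ FinD b u x = fderiv ℝ u x := by
  have h (n : ℕ) : Psi b n x = x := by
    rw [Psi, hx, mul_inv_cancel₀ (by positivity), one_smul]
  constructor
  · rw [Fext, h, h]; ring
  · rw [FinD, h, h]
    ext v
    have h (n : ℕ) : PsiD b n x v = v - ((n : ℝ) * (b ^ 2)⁻¹ * inner ℝ x v) • x := by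
      rw [PsiD, hx, mul_inv_cancel₀ (by positivity), one_smul]
      simp [smul_smul]
    simp only [sub_apply, smul_apply,
      ContinuousLinearMap.comp_apply, h, map_sub, map_smul, smul_eq_mul]
    push_cast
    ring

def Ut (b : ℝ) (u : E3 → ℝ) (x : E3) : ℝ :=
  if b ≤ ‖x‖ then u x else if x = 0 then 0 else Fext b u x

lemma ut_lt (b : ℝ) (u : E3 → ℝ) (x : E3) (hx : x ≠ 0) (h : ‖x‖ < b) : Ut b u x = Fext b u x := by
  rw [Ut, if_neg (not_le.2 h), if_neg hx]

lemma ut_ge (b : ℝ) (u : E3 → ℝ) (x : E3) (h : b ≤ ‖x‖) : Ut b u x = u x := by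
  rw [Ut, if_pos h]

lemma ut_hasFDerivAt (b : ℝ) (hb : 0 < b) (u : E3 → ℝ) (hu : ContDiff ℝ 1 u) (x : E3) (hx : x ≠ 0) :
    HasFDerivAt (Ut b u) (if b ≤ ‖x‖ then fderiv ℝ u x else FinD b u x) x := by
  have hud := (hu.differentiable (by norm_num) x).hasFDerivAt
  rcases lt_trichotomy ‖x‖ b with h | h | h
  · rw [if_neg (not_le.2 h)]
    refine (fin_hasFDerivAt b u hu x hx).congr_of_eventuallyEq ?_
    filter_upwards [(isOpen_lt continuous_norm continuous_const).mem_nhds h,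
      isOpen_ne.mem_nhds hx] with y hy hy0 using ut_lt b u y hy0 hy
  · rw [if_pos h.ge, ← hasFDerivWithinAt_univ]
    obtain ⟨e1, e2⟩ := fin_sphere b hb u x h
    have hun : (Set.univ : Set E3) ∈ nhdsWithin x Set.univ := Filter.univ_mem
    have h1 : HasFDerivWithinAt (Ut b u) (fderiv ℝ u x) {y | b ≤ ‖y‖} x :=
      hud.hasFDerivWithinAt.congr (fun y hy => ut_ge b u y hy) (ut_ge b u x h.ge)
    have h2 : HasFDerivWithinAt (Ut b u) (fderiv ℝ u x) {y | ‖y‖ < b ∧ y ≠ 0} x := by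
      refine HasFDerivWithinAt.congr (f := Fext b u) ?_ (fun y hy => ut_lt b u y hy.2 hy.1) ?_
      · rw [← e2]; exact (fin_hasFDerivAt b u hu x hx).hasFDerivWithinAt
      · rw [ut_ge b u x h.ge, e1]
    have h3 := (h1.union h2).hasFDerivAt (by
      filter_upwards [isOpen_ne.mem_nhds hx] with y hy
      rcases le_or_gt b ‖y‖ with h | h
      · exact Or.inl h
      · exact Or.inr ⟨h, hy⟩)
    exact h3.hasFDerivWithinAt
  · rw [if_pos h.le]
    refine hud.congr_of_eventuallyEq ?_
    filter_upwards [(isOpen_lt continuous_const continuous_norm).mem_nhds h] with y hy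
      using ut_ge b u y (le_of_lt hy)

lemma ut_zero (b : ℝ) (hb : 0 < b) (u : E3 → ℝ) (hs : HasCompactSupport u) :
    Ut b u =ᶠ[nhds 0] fun _ => 0 := by
  obtain ⟨R, hR0, hR⟩ := hs.isCompact.isBounded.exists_pos_norm_le
  have hz (y : E3) (hy : R < ‖y‖) : u y = 0 := by
    by_contra h
    exact absurd (hR y (subset_tsupport _ h)) (not_le.2 hy)
  filter_upwards [ball_mem_nhds (0 : E3) hb, ball_mem_nhds (0 : E3) (show 0 < b * b / R by positivity)] with x h1 h2
  by_cases hx : x = 0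
  · subst hx
    simp [Ut, hb]
  have hx' : 0 < ‖x‖ := norm_pos_iff.2 hx
  have hm (n : ℕ) (hn : 2 ≤ n) : u (Psi b n x) = 0 := by
    refine hz _ (lt_of_lt_of_le ?_ (psi_mem b hb n hn x ⟨h1, hx⟩).1)
    rw [mem_ball_zero_iff, lt_div_iff₀ hR0] at h2
    rw [← mul_div_assoc, lt_div_iff₀ hx']
    linarith
  rw [ut_lt b u x hx (by simpa using h1), Fext, hm 2 le_rfl, hm 3 (by norm_num)]
  simp

lemma ut_contDiff (b : ℝ) (hb : 0 < b) (u : E3 → ℝ) (hu : ContDiff ℝ 1 u) (hs : HasCompactSupport u) :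
    ContDiff ℝ 1 (Ut b u) := by
  rw [contDiff_iff_contDiffAt]
  intro x
  by_cases hx : x = 0
  · subst hx
    exact contDiffAt_const.congr_of_eventuallyEq (ut_zero b hb u hs)
  rw [contDiffAt_one_iff]
  refine ⟨fun x => if b ≤ ‖x‖ then fderiv ℝ u x else FinD b u x, {y | y ≠ 0}, isOpen_ne.mem_nhds hx, ?_,
    fun y hy => ut_hasFDerivAt b hb u hu y hy⟩
  apply ContinuousOn.if
  · rintro a ⟨-, ha⟩
    exact (fin_sphere b hb u a (frontier_le_subset_eq continuous_const continuous_norm ha).symm).2.symm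
  · exact (hu.continuous_fderiv (by norm_num)).continuousOn
  · refine ContinuousOn.mono (s := {y | y ≠ 0}) ?_ Set.inter_subset_left
    intro y hy
    have h := (fin_contDiffAt b u hu y hy).continuousAt_fderiv (by norm_num)
    refine (h.congr ?_).continuousWithinAt
    filter_upwards [isOpen_ne.mem_nhds hy] with z hz using (fin_hasFDerivAt b u hu z hz).fderiv

lemma ut_supp (b : ℝ) (u : E3 → ℝ) (hs : HasCompactSupport u) : HasCompactSupport (Ut b u) := by
  refine HasCompactSupport.intro (K := closedBall 0 b ∪ tsupport u)
    ((isCompact_closedBall _ _).union hs.isCompact) fun x hx => ?_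
  simp only [Set.mem_union, mem_closedBall_zero_iff, not_or, not_le] at hx
  rw [ut_ge b u x hx.1.le]
  exact image_eq_zero_of_notMem_tsupport hx.2

lemma ut_lint (b : ℝ) (hb : 0 < b) (u : E3 → ℝ) (hu : ContDiff ℝ 1 u) :
    ∫⁻ x, ENNReal.ofReal (‖fderiv ℝ (Ut b u) x‖ ^ 2) ≤ ENNReal.ofReal ((2 * (2 + √2)) ^ 2) *
      ∫⁻ x in (ball (0 : E3) b)ᶜ, ENNReal.ofReal (‖fderiv ℝ u x‖ ^ 2) := by
  set I := ∫⁻ x in (ball (0 : E3) b)ᶜ, ENNReal.ofReal (‖fderiv ℝ u x‖ ^ 2) with hI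
  have hS : MeasurableSet (ball (0 : E3) b \ {0}) := measurableSet_ball.diff (measurableSet_singleton _)
  have hM : ∫⁻ x in (ball (0 : E3) b)ᶜ, ENNReal.ofReal (‖fderiv ℝ (Ut b u) x‖ ^ 2) = I := by
    refine setLIntegral_congr_fun measurableSet_ball.compl fun x hx => ?_
    have hx' : b ≤ ‖x‖ := by simpa using hx
    have h0 : x ≠ 0 := norm_pos_iff.1 (hb.trans_le hx')
    simp only [(ut_hasFDerivAt b hb u hu x h0).fderiv, if_pos hx']
  have hB : ∫⁻ x in ball (0 : E3) b, ENNReal.ofReal (‖fderiv ℝ (Ut b u) x‖ ^ 2) ≤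
      ENNReal.ofReal ((3 + 2 * √2) ^ 2) * I := by
    have hae : (ball (0 : E3) b \ {0} : Set E3) =ᵐ[volume] ball (0 : E3) b :=
      sdiff_null_ae_eq_self (measure_singleton _)
    rw [← setLIntegral_congr hae]
    have hmeas : AEMeasurable (fun x : E3 => ENNReal.ofReal ((3 + 2 * √2) * 3) *
        ENNReal.ofReal (‖(fderiv ℝ u (Psi b 2 x)).comp (PsiD b 2 x)‖ ^ 2))
        (volume.restrict (ball (0 : E3) b \ {0})) := by
      have h1 : Measurable (fun x : E3 => ENNReal.ofReal ((3 + 2 * √2) * 3) *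
          ENNReal.ofReal (‖fderiv ℝ (fun y => u (Psi b 2 y)) x‖ ^ 2)) :=
        (((measurable_fderiv ℝ _).norm.pow_const 2).ennreal_ofReal).const_mul _
      refine h1.aemeasurable.congr ?_
      filter_upwards [ae_restrict_mem hS] with x hx
      rw [(psi_comp b 2 u hu x hx.2).fderiv]
    calc _ ≤ ∫⁻ x in ball (0 : E3) b \ {0}, (ENNReal.ofReal ((3 + 2 * √2) * 3) *
            ENNReal.ofReal (‖(fderiv ℝ u (Psi b 2 x)).comp (PsiD b 2 x)‖ ^ 2) +
          ENNReal.ofReal ((3 + 2 * √2) * √2) *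
            ENNReal.ofReal (‖(fderiv ℝ u (Psi b 3 x)).comp (PsiD b 3 x)‖ ^ 2)) := by
          refine setLIntegral_mono' hS fun x hx => ?_
          have hx' : ‖x‖ < b := by simpa using hx.1
          rw [(ut_hasFDerivAt b hb u hu x hx.2).fderiv, if_neg (not_le.2 hx'),
            ← ENNReal.ofReal_mul (by positivity), ← ENNReal.ofReal_mul (by positivity),
            ← ENNReal.ofReal_add (by positivity) (by positivity)]
          exact ENNReal.ofReal_le_ofReal (combine _ _)
      _ = _ := lintegral_add_left' hmeas _
      _ ≤ ENNReal.ofReal ((3 + 2 * √2) * 3) * (ENNReal.ofReal ((2 : ℕ) - 1) * I) +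
          ENNReal.ofReal ((3 + 2 * √2) * √2) * (ENNReal.ofReal ((3 : ℕ) - 1) * I) := by
          rw [lintegral_const_mul' _ _ ENNReal.ofReal_ne_top, lintegral_const_mul' _ _ ENNReal.ofReal_ne_top]
          gcongr
          · exact psi_lint b hb 2 (Or.inl rfl) u
          · exact psi_lint b hb 3 (Or.inr rfl) u
      _ = _ := by
          rw [← mul_assoc, ← mul_assoc, ← add_mul, ← ENNReal.ofReal_mul (by positivity),
            ← ENNReal.ofReal_mul (by positivity), ← ENNReal.ofReal_add (by norm_num; positivity) (by norm_num; positivity)]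
          congr 2
          push_cast
          ring
  rw [← lintegral_add_compl _ (measurableSet_ball (x := (0 : E3)) (ε := b)), hM]
  calc _ ≤ ENNReal.ofReal ((3 + 2 * √2) ^ 2) * I + ENNReal.ofReal 1 * I := by
        rw [ENNReal.ofReal_one, one_mul]; gcongr
    _ ≤ _ := by
        rw [← add_mul, ← ENNReal.ofReal_add (by positivity) (by norm_num)]
        gcongr
        nlinarith [Real.sqrt_nonneg 2]

/-- **Extension estimate** (from the proof of the Appendix theorem):
for `b > 0` and `u : ℝ³ → ℝ` of class `C¹` with compact support, the extension
`ũ(x) = u(x)` for `|x| ≥ b`, `ũ(x) = 3u(b² x/|x|²) - 2u(b³ x/|x|³)` for `0 < |x| < b`,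
`ũ(0) = 0`, is `C¹` with compact support, agrees with `u` on `M = ℝ³ \ B(0,b)`, and
satisfies `‖∇ũ‖_{L²(ℝ³)} ≤ 2(2+√2) ‖∇u‖_{L²(M)}`. -/
theorem extension_estimate
    (b : ℝ) (hb : 0 < b)
    (u : E3 → ℝ) (hu : ContDiff ℝ 1 u) (husupp : HasCompactSupport u) :
    let M : Set E3 := (ball (0 : E3) b)ᶜ
    let ut : E3 → ℝ := fun x =>
      if b ≤ ‖x‖ then u x
      else if x = 0 then 0
      else 3 * u ((b ^ 2 * ‖x‖ ^ (-2 : ℝ)) • x) - 2 * u ((b ^ 3 * ‖x‖ ^ (-3 : ℝ)) • x)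
    ContDiff ℝ 1 ut ∧ HasCompactSupport ut ∧ (∀ x ∈ M, ut x = u x) ∧
      (∫ x, ‖fderiv ℝ ut x‖ ^ (2 : ℝ)) ^ ((1 : ℝ) / 2) ≤
        2 * (2 + Real.sqrt 2) * (∫ x in M, ‖fderiv ℝ u x‖ ^ (2 : ℝ)) ^ ((1 : ℝ) / 2) := by
  intro M ut
  have hut : ut = Ut b u := by
    funext x
    have h2 : ‖x‖ ^ (-2 : ℝ) = (‖x‖ ^ 2)⁻¹ := by
      rw [Real.rpow_neg (norm_nonneg _)]; norm_cast
    have h3 : ‖x‖ ^ (-3 : ℝ) = (‖x‖ ^ 3)⁻¹ := by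
      rw [Real.rpow_neg (norm_nonneg _)]; norm_cast
    simp only [ut, Ut, Fext, Psi, h2, h3]
  have hC := ut_contDiff b hb u hu husupp
  rw [hut]
  refine ⟨hC, ut_supp b u husupp, fun x hx => ut_ge b u x (by simpa [M] using hx), ?_⟩
  simp only [Real.rpow_two, ← Real.sqrt_eq_rpow]
  have hcu : Continuous fun x => ‖fderiv ℝ u x‖ ^ 2 := (hu.continuous_fderiv (by norm_num)).norm.pow 2
  have hcU : Continuous fun x => ‖fderiv ℝ (Ut b u) x‖ ^ 2 := (hC.continuous_fderiv (by norm_num)).norm.pow 2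
  have hint : Integrable fun x => ‖fderiv ℝ u x‖ ^ 2 := by
    refine hcu.integrable_of_hasCompactSupport ?_
    exact (husupp.fderiv ℝ).comp_left (g := fun L : E3 →L[ℝ] ℝ => ‖L‖ ^ 2) (by simp)
  have hfin : ∫⁻ x in M, ENNReal.ofReal (‖fderiv ℝ u x‖ ^ 2) ≠ ⊤ :=
    (hint.integrableOn.lintegral_lt_top).ne
  have key : ∫ x, ‖fderiv ℝ (Ut b u) x‖ ^ 2 ≤ (2 * (2 + √2)) ^ 2 * ∫ x in M, ‖fderiv ℝ u x‖ ^ 2 := by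
    rw [integral_eq_lintegral_of_nonneg_ae (Filter.Eventually.of_forall fun x => by positivity)
        hcU.aestronglyMeasurable,
      integral_eq_lintegral_of_nonneg_ae (Filter.Eventually.of_forall fun x => by positivity)
        hcu.aestronglyMeasurable]
    have h := ENNReal.toReal_mono (ENNReal.mul_ne_top ENNReal.ofReal_ne_top hfin) (ut_lint b hb u hu)
    rwa [ENNReal.toReal_mul, ENNReal.toReal_ofReal (by positivity)] at h
  calc _ ≤ √((2 * (2 + √2)) ^ 2 * ∫ x in M, ‖fderiv ℝ u x‖ ^ 2) := Real.sqrt_le_sqrt key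
    _ = _ := by rw [Real.sqrt_mul (by positivity), Real.sqrt_sq (by positivity)]
end
end

section
/- Let ξ : ℝ³ → ℝ be twice continuously differentiable with ξ(x) > 0 for all x, and suppose ξ − 1 has compact support. Let R' : ℝ³ → ℝ be continuous with R'(x) ≥ 0 for all x. If ξ satisfies Δξ = (1/8)·R'·(ξ − ξ^{−7}) on ℝ³, where Δ is the Euclidean Laplacian, then ξ ≡ 1. -/
open MeasureTheory Real

noncomputable section

/-- The Euclidean Laplacian of `ξ : ℝ³ → ℝ`: `Δξ = ∂₁²ξ + ∂₂²ξ + ∂₃²ξ`. -/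
def laplacian (ξ : E3 → ℝ) (x : E3) : ℝ :=
  ∑ i : Fin 3,
    fderiv ℝ (fun y => fderiv ℝ ξ y (EuclideanSpace.single i (1 : ℝ))) x
      (EuclideanSpace.single i (1 : ℝ))

/-- **Uniqueness argument from the proof of Theorem 4.2** (Euclidean form): if `ξ > 0` is
`C²`, `ξ - 1` has compact support, `R' ≥ 0` is continuous and
`Δξ = (1/8) R' (ξ - ξ⁻⁷)`, then `ξ ≡ 1`. -/
theorem lichnerowicz_uniqueness
    (ξ R' : E3 → ℝ) (hξ : ContDiff ℝ 2 ξ) (hξpos : ∀ x, 0 < ξ x)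
    (hsupp : HasCompactSupport (fun x => ξ x - 1))
    (hR'cont : Continuous R') (hR'nonneg : ∀ x, 0 ≤ R' x)
    (hPDE : ∀ x, laplacian ξ x = (1 / 8) * R' x * (ξ x - (ξ x) ^ (-7 : ℤ))) :
    ∀ x, ξ x = 1 := by
  set u : E3 → ℝ := fun x => ξ x - 1 with hu
  have hu2 : ContDiff ℝ 2 u := hξ.sub contDiff_const
  have hfd : ∀ x, fderiv ℝ u x = fderiv ℝ ξ x := fun x => by
    simp [hu, fderiv_sub_const]
  set e : Fin 3 → E3 := fun i => EuclideanSpace.single i (1 : ℝ) with he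
  set v : Fin 3 → E3 → ℝ := fun i y => fderiv ℝ ξ y (e i) with hv
  have hvu : ∀ i, v i = fun y => fderiv ℝ u y (e i) := fun i => by
    funext y; simp [hv, hfd]
  have hv1 : ∀ i, ContDiff ℝ 1 (v i) := fun i =>
    (hξ.fderiv_right (m := 1) (by norm_num)).clm_apply contDiff_const
  have hvs : ∀ i, HasCompactSupport (v i) := fun i => by
    rw [hvu]; exact hsupp.fderiv_apply ℝ (e i)
  have hdc : ∀ i, Continuous (fun x => fderiv ℝ (v i) x (e i)) := fun i =>
    ((hv1 i).continuous_fderiv (by norm_num)).clm_apply continuous_const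
  have i1 : ∀ i, Integrable (fun x => u x * fderiv ℝ (v i) x (e i)) := fun i =>
    (hu2.continuous.mul (hdc i)).integrable_of_hasCompactSupport hsupp.mul_right
  have i2 : ∀ i, Integrable (fun x => v i x * v i x) := fun i =>
    ((hv1 i).continuous.mul (hv1 i).continuous).integrable_of_hasCompactSupport
      (hvs i).mul_right
  have i3 : ∀ i, Integrable (fun x => u x * v i x) := fun i =>
    (hu2.continuous.mul (hv1 i).continuous).integrable_of_hasCompactSupport
      hsupp.mul_right
  have key : ∀ i, ∫ x, u x * fderiv ℝ (v i) x (e i) = - ∫ x, v i x * v i x := fun i => by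
    have h := integral_mul_fderiv_eq_neg_fderiv_mul_of_integrable (μ := volume)
      (f := u) (g := v i) (v := e i) (by simpa only [hfd] using i2 i) (i1 i) (i3 i)
      (fun x _ => hu2.differentiable (by norm_num) x)
      (fun x _ => (hv1 i).differentiable (by norm_num) x)
    simpa only [hfd] using h
  have hsum : ∫ x, u x * laplacian ξ x = ∑ i, - ∫ x, v i x * v i x := by
    rw [← Finset.sum_congr rfl (fun i _ => key i), ← integral_finsetSum _ (fun i _ => i1 i)]
    congr 1; funext x
    rw [← Finset.mul_sum]; rfl
  have hpos : 0 ≤ ∫ x, u x * laplacian ξ x := by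
    refine integral_nonneg fun x => ?_
    show 0 ≤ u x * laplacian ξ x
    rw [hPDE]
    have hx := hξpos x
    have h8 : ξ x - ξ x ^ (-7 : ℤ) = (ξ x - 1) * ((∑ k ∈ Finset.range 8, ξ x ^ k) / ξ x ^ 7) := by
      rw [zpow_neg]
      simp only [Finset.sum_range_succ, Finset.sum_range_zero]
      norm_cast
      field_simp
      ring
    rw [h8]
    have hq : 0 ≤ (∑ k ∈ Finset.range 8, ξ x ^ k) / ξ x ^ 7 := by positivity
    have : u x * (1 / 8 * R' x * ((ξ x - 1) * ((∑ k ∈ Finset.range 8, ξ x ^ k) / ξ x ^ 7)))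
      = (1 / 8) * (R' x * (u x ^ 2 * ((∑ k ∈ Finset.range 8, ξ x ^ k) / ξ x ^ 7))) := by
      simp only [hu]; ring
    rw [this]
    have := hR'nonneg x
    positivity
  have hnn : ∀ i, 0 ≤ ∫ x, v i x * v i x := fun i =>
    integral_nonneg fun x => mul_self_nonneg _
  have hz : ∀ i, ∫ x, v i x * v i x = 0 := by
    rw [hsum, Finset.sum_neg_distrib] at hpos
    intro i
    have := Finset.single_le_sum (fun i _ => hnn i) (Finset.mem_univ i)
    linarith [hnn i]
  have hv0 : ∀ i x, v i x = 0 := by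
    intro i x
    have h := (integral_eq_zero_iff_of_nonneg (fun x => mul_self_nonneg (v i x)) (i2 i)).1 (hz i)
    have h' := (Continuous.ae_eq_iff_eq volume ((hv1 i).continuous.mul (hv1 i).continuous)
      continuous_zero).1 h
    exact mul_self_eq_zero.1 (congrFun h' x)
  have hd0 : ∀ x, fderiv ℝ ξ x = 0 := by
    intro x
    have h : (fderiv ℝ ξ x : E3 →ₗ[ℝ] ℝ) = 0 := by
      refine (EuclideanSpace.basisFun (Fin 3) ℝ).toBasis.ext fun i => ?_
      simpa [hv, he] using hv0 i x
    ext y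
    exact LinearMap.congr_fun h y
  obtain ⟨y, hy⟩ : ∃ y, y ∉ tsupport u := by
    by_contra! hcon
    have : tsupport u = Set.univ := Set.eq_univ_of_forall hcon
    exact noncompact_univ E3 (this ▸ hsupp.isCompact)
  have hy1 : ξ y = 1 := by
    have := image_eq_zero_of_notMem_tsupport hy
    simp only [hu] at this
    linarith
  intro x
  rw [is_const_of_fderiv_eq_zero (hξ.differentiable (by norm_num)) hd0 x y, hy1]
end
end

section
/- Let P, Q : ℝ² → ℝ be smooth functions satisfying ∂₁P + ∂₂Q = 0 and ∂₁Q − ∂₂P = 0 everywhere on ℝ². Then there exists a smooth function f : ℝ² → ℝ with ∂₁∂₁f = P, ∂₁∂₂f = Q and ∂₂∂₂f = −P; in particular f is harmonic (∂₁²f + ∂₂²f = 0). Equivalently: every smooth symmetric trace-free 2-tensor field S on ℝ² (S₁₁ = −S₂₂ = P, S₁₂ = S₂₁ = Q) whose divergence vanishes (∂_b S_{ab} = 0 for a = 1,2) is the Hessian of a harmonic function. -/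
noncomputable section

abbrev V2 := Fin 2 → ℝ

/-- Partial derivative `∂ᵢ f` on `ℝ²`. -/
def pd2 (i : Fin 2) (f : V2 → ℝ) (x : V2) : ℝ := fderiv ℝ f x (Pi.single i 1)

theorem poincare_aux (A B : V2 → ℝ) (hA : ContDiff ℝ (⊤ : ℕ∞) A) (hB : ContDiff ℝ (⊤ : ℕ∞) B)
    (h : ∀ x, pd2 0 B x = pd2 1 A x) :
    ∃ f : V2 → ℝ, ContDiff ℝ (⊤ : ℕ∞) f ∧ (∀ x, pd2 0 f x = A x) ∧ (∀ x, pd2 1 f x = B x) := by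
  let p : Fin 2 → (V2 →L[ℝ] ℝ) := fun i => ContinuousLinearMap.proj i
  let w : V2 → (V2 →L[ℝ] ℝ) := fun x => A x • p 0 + B x • p 1
  have hw : ContDiff ℝ (⊤ : ℕ∞) w :=
    (hA.smul contDiff_const).add (hB.smul contDiff_const)
  have hAd : Differentiable ℝ A := hA.differentiable (by simp)
  have hBd : Differentiable ℝ B := hB.differentiable (by simp)
  have hdec : ∀ (L : V2 →L[ℝ] ℝ) (u : V2),
      L u = u 0 * L (Pi.single 0 1) + u 1 * L (Pi.single 1 1) := by
    intro L u
    have hu : u = u 0 • (Pi.single 0 1 : V2) + u 1 • (Pi.single 1 1 : V2) := by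
      ext i; fin_cases i <;> simp
    conv_lhs => rw [hu]
    simp only [map_add, map_smul, smul_eq_mul]
  obtain ⟨f, hf⟩ := (convex_univ (𝕜 := ℝ) (E := V2)).exists_forall_hasFDerivAt_of_fderiv_symmetric
    isOpen_univ (ω := w) (hw.differentiable (by simp)).differentiableOn (by
      intro a _ x y
      have hd : HasFDerivAt w ((fderiv ℝ A a).smulRight (p 0) + (fderiv ℝ B a).smulRight (p 1)) a :=
        ((hAd a).hasFDerivAt.smul_const (p 0)).add ((hBd a).hasFDerivAt.smul_const (p 1))
      rw [hd.fderiv]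
      have h1 := h a
      simp only [pd2] at h1
      simp only [ContinuousLinearMap.add_apply, ContinuousLinearMap.smulRight_apply,
        ContinuousLinearMap.smul_apply, smul_eq_mul, p, ContinuousLinearMap.proj_apply]
      rw [hdec (fderiv ℝ A a) x, hdec (fderiv ℝ A a) y, hdec (fderiv ℝ B a) x,
        hdec (fderiv ℝ B a) y, h1]
      ring)
  have hfd : fderiv ℝ f = w := funext fun x => (hf x trivial).fderiv
  refine ⟨f, ?_, ?_, ?_⟩
  · exact contDiff_infty_iff_fderiv.2 ⟨fun x => (hf x trivial).differentiableAt, hfd ▸ hw⟩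
  · intro x; simp [pd2, hfd, w, p]
  · intro x; simp [pd2, hfd, w, p]

/-- **Claim (28g) of Section 2**: every smooth symmetric trace-free divergence-free 2-tensor
on `ℝ²` (components `S₁₁ = -S₂₂ = P`, `S₁₂ = S₂₁ = Q` with `∂₁P + ∂₂Q = 0` and
`∂₁Q - ∂₂P = 0`) is the Hessian of a harmonic function: there is a smooth `f` with
`f_{,11} = P`, `f_{,12} = Q`, `f_{,22} = -P`. -/
theorem tracefree_divfree_is_hessian_of_harmonic
    (P Q : V2 → ℝ) (hP : ContDiff ℝ (⊤ : ℕ∞) P) (hQ : ContDiff ℝ (⊤ : ℕ∞) Q)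
    (hdiv1 : ∀ x, pd2 0 P x + pd2 1 Q x = 0)
    (hdiv2 : ∀ x, pd2 0 Q x - pd2 1 P x = 0) :
    ∃ f : V2 → ℝ, ContDiff ℝ (⊤ : ℕ∞) f ∧
      (∀ x, pd2 0 (fun y => pd2 0 f y) x = P x) ∧
      (∀ x, pd2 0 (fun y => pd2 1 f y) x = Q x) ∧
      (∀ x, pd2 1 (fun y => pd2 1 f y) x = -P x) := by
  obtain ⟨g, hg, hg0, hg1⟩ := poincare_aux P Q hP hQ (fun x => by linarith [hdiv2 x])
  have hneg : ∀ x, pd2 1 (fun y => -P y) x = -pd2 1 P x := fun x => by simp [pd2]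
  have hneg0 : ∀ x, pd2 0 (fun y => -P y) x = -pd2 0 P x := fun x => by simp [pd2]
  obtain ⟨k, hk, hk0, hk1⟩ := poincare_aux Q (fun y => -P y) hQ hP.neg
    (fun x => by rw [hneg0]; linarith [hdiv1 x])
  obtain ⟨f, hf, hf0, hf1⟩ := poincare_aux g k hg hk (fun x => by rw [hk0, hg1])
  refine ⟨f, hf, ?_, ?_, ?_⟩
  · simpa only [hf0] using hg0
  · simpa only [hf1] using hk0
  · simpa only [hf1] using hk1
end
end
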